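/- Let k be a field of characteristic 0, q in k a nonzero element, and n > 1. Then the Gaussian binomial coefficients binom(n,i)_q vanish for all 1 ≤ i ≤ n-1 if and only if q has multiplicative order exactly n. -/

import Mathlib

/-- The Gaussian (`q`-)binomial coefficient `binom(n,i)_q`, i.e. the evaluation at `q`
of the Gaussian binomial polynomial over `ℤ`, defined via the `q`-Pascal recursion. -/
def qBinom {k : Type*} [Field k] (q : k) : ℕ → ℕ → k
  | _, 0 => 1
  | 0, _ + 1 => 0
  | n + 1, i + 1 => q ^ (i + 1) * qBinom q n (i + 1) + qBinom q n i

theorem qBinom_zero_right {k : Type*} [Field k] (q : k) (n : ℕ) : qBinom q n 0 = 1 := by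
  cases n <;> simp [qBinom]

theorem qBinom_eq_zero_of_lt {k : Type*} [Field k] (q : k) {n i : ℕ} (h : n < i) :
    qBinom q n i = 0 := by
  induction n generalizing i with
  | zero =>
    cases i with
    | zero => omega
    | succ i => simp [qBinom]
  | succ n ih =>
    cases i with
    | zero => omega
    | succ i => simp [qBinom, ih (show n < i + 1 by omega), ih (show n < i by omega)]

theorem qBinom_self {k : Type*} [Field k] (q : k) (n : ℕ) : qBinom q n n = 1 := by
  induction n with
  | zero => simp [qBinom]
  | succ n ih => simp [qBinom, ih, qBinom_eq_zero_of_lt q (Nat.lt_succ_self n)]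

theorem qBinom_succ_right_mul {k : Type*} [Field k] (q : k) (n i : ℕ) :
    q ^ i * (q ^ (i + 1) - 1) * qBinom q n (i + 1) = (q ^ n - q ^ i) * qBinom q n i := by
  induction n generalizing i with
  | zero => cases i <;> simp [qBinom]
  | succ n ih =>
    cases i with
    | zero =>
      have h := ih 0
      simp only [qBinom, qBinom_zero_right] at h ⊢
      linear_combination q * h
    | succ i =>
      have h₀ := ih i
      have h₁ := ih (i + 1)
      simp only [qBinom] at h₀ h₁ ⊢
      linear_combination q ^ (i + 2) * h₁ + q * h₀

/-- The `q`-binomial theorem, coefficientwise. -/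
theorem coeff_prod_one_add_pow_mul_X {k : Type*} [Field k] (q : k) (n i : ℕ) :
    (∏ j ∈ Finset.range n, (1 + Polynomial.C (q ^ j) * Polynomial.X)).coeff i =
      q ^ i.choose 2 * qBinom q n i := by
  induction n generalizing i with
  | zero => cases i <;> simp [qBinom, Polynomial.coeff_one]
  | succ n ih =>
    have hprod : (∏ j ∈ Finset.range (n + 1), (1 + Polynomial.C (q ^ j) * Polynomial.X)) =
        (∏ j ∈ Finset.range n, (1 + Polynomial.C (q ^ j) * Polynomial.X)).comp
          (Polynomial.C q * Polynomial.X) * (1 + Polynomial.X) := by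
      rw [Finset.prod_range_succ', Polynomial.prod_comp]
      simp [pow_succ, mul_assoc]
    rw [hprod, mul_add, mul_one, Polynomial.coeff_add, Polynomial.comp_C_mul_X_coeff, ih]
    cases i with
    | zero => simp [qBinom_zero_right]
    | succ i =>
      rw [Polynomial.coeff_mul_X, Polynomial.comp_C_mul_X_coeff, ih, qBinom,
        Nat.choose_succ_succ' i 1, Nat.choose_one_right, pow_add]
      ring

/-- In characteristic `0`, if the middle Gaussian binomial coefficients of row `n` vanish, then
`∏ j < n, (1 + q ^ j X)` is separable at `-1`, so no power `q ^ d` with `0 < d < n` equals `1`. -/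
theorem pow_ne_one_of_qBinom_eq_zero {k : Type*} [Field k] [CharZero k] {q : k} (hq : q ≠ 0)
    {n d : ℕ} (h : ∀ i, 1 ≤ i → i ≤ n - 1 → qBinom q n i = 0) (hd : 0 < d) (hdn : d < n) :
    q ^ d ≠ 1 := by
  intro hqd
  have hP : (∏ j ∈ Finset.range n, (1 + Polynomial.C (q ^ j) * Polynomial.X)) =
      1 + Polynomial.C (q ^ n.choose 2) * Polynomial.X ^ n := by
    ext i
    rw [coeff_prod_one_add_pow_mul_X, Polynomial.coeff_add, Polynomial.coeff_C_mul_X_pow,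
      Polynomial.coeff_one]
    rcases Nat.eq_zero_or_pos i with rfl | hi
    · simp [qBinom_zero_right, show 0 ≠ n by omega]
    · rcases lt_trichotomy i n with hin | rfl | hin
      · simp [h i hi (by omega), hi.ne', hin.ne]
      · simp [qBinom_self, hi.ne']
      · simp [qBinom_eq_zero_of_lt q hin, hi.ne', hin.ne']
  have hdvd : (1 + Polynomial.X) ^ 2 ∣
      ∏ j ∈ Finset.range n, (1 + Polynomial.C (q ^ j) * Polynomial.X) := by
    have hsub : ({0, d} : Finset ℕ) ⊆ Finset.range n := by
      intro j hj
      simp only [Finset.mem_insert, Finset.mem_singleton] at hj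
      simp only [Finset.mem_range]
      omega
    have := Finset.prod_dvd_prod_of_subset _ _
      (fun j ↦ 1 + Polynomial.C (q ^ j) * Polynomial.X) hsub
    rw [Finset.prod_pair hd.ne] at this
    simpa [hqd, ← Polynomial.C_pow, ← sq, -map_pow] using this
  obtain ⟨G, hG⟩ := hdvd
  have hder := congrArg (fun p ↦ (Polynomial.derivative p).eval (-1)) (hP.symm.trans hG)
  have hn : n ≠ 0 := by omega
  simp [Polynomial.derivative_mul, Polynomial.derivative_pow, hq, hn] at hder

/-- In characteristic `0`, for `q ≠ 0` and `n > 1`, all the Gaussian binomial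
coefficients `binom(n,i)_q`, `1 ≤ i ≤ n-1`, vanish iff `q` has multiplicative
order exactly `n`. -/
theorem qBinom_eq_zero_iff_orderOf {k : Type*} [Field k] [CharZero k]
    (q : k) (hq : q ≠ 0) (n : ℕ) (hn : 1 < n) :
    (∀ i, 1 ≤ i → i ≤ n - 1 → qBinom q n i = 0) ↔ orderOf q = n := by
  constructor
  · intro h
    have hqn : q ^ n = 1 := by
      have h₁ := qBinom_succ_right_mul q n 0
      simp only [zero_add, h 1 le_rfl (by omega), qBinom_zero_right] at h₁
      linear_combination -h₁
    refine (orderOf_le_of_pow_eq_one (by omega) hqn).eq_of_not_lt fun hlt ↦ ?_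
    exact pow_ne_one_of_qBinom_eq_zero hq h
      (orderOf_pos_iff.2 (isOfFinOrder_iff_pow_eq_one.2 ⟨n, by omega, hqn⟩)) hlt
      (pow_orderOf_eq_one q)
  · intro h i hi
    induction i, hi using Nat.le_induction with
    | base =>
      intro _
      have h₁ := qBinom_succ_right_mul q n 0
      have hq1 : q - 1 ≠ 0 := by
        rw [sub_ne_zero]
        rintro rfl
        rw [orderOf_one] at h
        omega
      have hqn : q ^ n = 1 := h ▸ pow_orderOf_eq_one q
      simpa [hqn, hq1] using h₁
    | succ i hi ih =>
      intro hin
      have h₁ := qBinom_succ_right_mul q n i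
      have hne : q ^ (i + 1) - 1 ≠ 0 :=
        sub_ne_zero.2 (pow_ne_one_of_lt_orderOf (by omega) (by omega))
      simpa [ih (by omega), hq, hne] using h₁
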